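/- Let p > n be a prime, α ≥ 1, and y = (y₁,...,y_n) ∈ (Z/p^αZ)^n. Suppose p^δ exactly divides ∏_{1≤j<k≤n} (y_j - y_k) with 2δ < α. Then the number of solutions x ∈ (Z/p^αZ)^n to the system Σ_i x_i^k ≡ Σ_i y_i^k mod p^α for k = 1,...,n is at most n!·p^δ. -/

import Mathlib

open Finset

/-!
Write `P_x = ∏ i, (X - x i)` and `D x` for the Vandermonde determinant of `x`. Newton's identities
turn the equality of the first `n` power sums into `P_x = P_y`; then all power sums agree, so the
Gram matrices of the Vandermonde matrices agree and `(D x) ^ 2 = (D y) ^ 2`.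

In `ZMod (p ^ α)` divisibility is a total preorder, and that is all the counting needs.
The solutions are counted by induction on `n`, removing the coordinate `r = x 0`, a root of `P_y`.
Taking the `y j` closest to `r` gives `(r - y j) * P_y' (y j) = 0`, which leaves
`#Ann (P_y' (y j))` choices for `r`. Since `(D y) ^ 2 ≠ 0`, this forces `P_y' (y j) ∣ r - y j` and
makes `P_y' r` and `P_y' (y j)` associated. Then `D (tail x)` is associated to the Vandermonde
determinant `d` of `y` without `y j`, so by induction there are at most `(n - 1)! * #Ann d`
choices for `tail x`. Up to a unit `D y = P_y' (y j) * d`, hence the two annihilator sizes multiply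
to `#Ann (D y)`, and the sum over `j` gives the factor `n!`. For `D y` associated to `p ^ δ` the
annihilator has `p ^ δ` elements.
-/

open Lagrange Matrix Polynomial

section Nodal

variable {R ι : Type*} [CommRing R] [Fintype ι] {x y : ι → R}

theorem coeff_nodal_card_sub (x : ι → R) {k : ℕ} (hk : k ≤ Fintype.card ι) :
    (nodal univ x).coeff (Fintype.card ι - k) =
      (-1) ^ k * MvPolynomial.aeval x (MvPolynomial.esymm ι R k) := by
  have hroots : nodal univ x = ((univ.val.map x).map fun t => X - C t).prod := by
    rw [Multiset.map_map]; rfl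
  rw [hroots, Multiset.prod_X_sub_C_coeff _ (by simp), MvPolynomial.aeval_esymm_eq_multiset_esymm]
  simp [Nat.sub_sub_self hk]

theorem nodal_eq_nodal_iff_esymm :
    nodal univ x = nodal univ y ↔ ∀ k ≤ Fintype.card ι,
      MvPolynomial.aeval x (MvPolynomial.esymm ι R k) =
        MvPolynomial.aeval y (MvPolynomial.esymm ι R k) := by
  refine ⟨fun h k hk => ?_, fun h => ?_⟩
  · have hcoeff := congrArg (fun P => coeff P (Fintype.card ι - k)) h
    simp only [coeff_nodal_card_sub _ hk] at hcoeff
    exact (isUnit_one.neg.pow k).mul_left_cancel hcoeff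
  · nontriviality R
    ext m
    rcases le_or_gt m (Fintype.card ι) with hm | hm
    · rw [← Nat.sub_sub_self hm, coeff_nodal_card_sub _ (Nat.sub_le _ _),
        coeff_nodal_card_sub _ (Nat.sub_le _ _), h _ (Nat.sub_le _ _)]
    · rw [coeff_eq_zero_of_natDegree_lt (by simpa [natDegree_nodal] using hm),
        coeff_eq_zero_of_natDegree_lt (by simpa [natDegree_nodal] using hm)]

theorem natCast_mul_aeval_esymm (x : ι → R) (k : ℕ) :
    (k : R) * MvPolynomial.aeval x (MvPolynomial.esymm ι R k) =
      (-1) ^ (k + 1) * ∑ a ∈ antidiagonal k with a.1 < k,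
        (-1) ^ a.1 * MvPolynomial.aeval x (MvPolynomial.esymm ι R a.1) * ∑ i, x i ^ a.2 := by
  simpa only [map_mul, map_natCast, map_pow, map_neg, map_one, map_sum, MvPolynomial.psum,
    MvPolynomial.aeval_X] using
    congrArg (MvPolynomial.aeval x) (MvPolynomial.mul_esymm_eq_sum ι R k)

theorem nodal_eq_nodal_of_sum_pow_eq (hfact : IsUnit ((Fintype.card ι).factorial : R))
    (h : ∀ k, 1 ≤ k → k ≤ Fintype.card ι → ∑ i, x i ^ k = ∑ i, y i ^ k) :
    nodal univ x = nodal univ y := by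
  refine nodal_eq_nodal_iff_esymm.2 fun k => ?_
  induction k using Nat.strong_induction_on with
  | _ k ih =>
    intro hk
    obtain rfl | hpos := k.eq_zero_or_pos
    · simp
    have hunit : IsUnit (k : R) :=
      isUnit_of_dvd_unit (Nat.cast_dvd_cast (Nat.dvd_factorial hpos hk)) hfact
    apply hunit.mul_left_cancel
    rw [natCast_mul_aeval_esymm, natCast_mul_aeval_esymm]
    congr 1
    refine sum_congr rfl fun a ha => ?_
    simp only [mem_filter, HasAntidiagonal.mem_antidiagonal] at ha
    rw [ih a.1 ha.2 (by omega), h a.2 (by omega) (by omega)]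

theorem aeval_eq_of_nodal_eq_nodal (h : nodal univ x = nodal univ y)
    {φ : MvPolynomial ι R} (hφ : φ.IsSymmetric) :
    MvPolynomial.aeval x φ = MvPolynomial.aeval y φ := by
  obtain ⟨Q, hQ⟩ := MvPolynomial.esymmAlgHom_surjective R (σ := ι) le_rfl ⟨φ, hφ⟩
  have hφQ : MvPolynomial.aeval
      (fun i : Fin (Fintype.card ι) => MvPolynomial.esymm ι R (i + 1)) Q = φ := by
    rw [← MvPolynomial.esymmAlgHom_apply, hQ]
  rw [← hφQ, MvPolynomial.comp_aeval_apply, MvPolynomial.comp_aeval_apply]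
  congr 2
  exact funext fun i => nodal_eq_nodal_iff_esymm.1 h _ i.2

theorem sum_pow_eq_of_nodal_eq_nodal (h : nodal univ x = nodal univ y) (k : ℕ) :
    ∑ i, x i ^ k = ∑ i, y i ^ k := by
  simpa [MvPolynomial.psum] using
    aeval_eq_of_nodal_eq_nodal h (MvPolynomial.psum_isSymmetric ι R k)

end Nodal

section Vandermonde

variable {R : Type*} [CommRing R] {n : ℕ}

theorem det_vandermonde_sq_eq_of_nodal_eq_nodal {x y : Fin n → R}
    (h : nodal univ x = nodal univ y) :
    (vandermonde x).det ^ 2 = (vandermonde y).det ^ 2 := by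
  have hgram : (vandermonde x)ᵀ * vandermonde x = (vandermonde y)ᵀ * vandermonde y := by
    ext i j
    simp only [vandermonde_transpose_mul_vandermonde, sum_pow_eq_of_nodal_eq_nodal h]
  simpa only [det_mul, det_transpose, ← sq] using congrArg det hgram

theorem associated_det_vandermonde_comp_perm (x : Fin n → R) (σ : Equiv.Perm (Fin n)) :
    Associated (vandermonde (x ∘ σ)).det (vandermonde x).det := by
  have hperm : vandermonde (x ∘ σ) = (vandermonde x).submatrix σ id := rfl
  have hsign : IsUnit ((Equiv.Perm.sign σ : ℤ) : R) :=
    (Equiv.Perm.sign σ).isUnit.map (Int.castRingHom R)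
  rw [hperm, det_permute]
  exact associated_unit_mul_left _ _ hsign

theorem associated_prod_sub_det_vandermonde (x : Fin n → R) :
    Associated (∏ q : Fin n × Fin n with q.1 < q.2, (x q.1 - x q.2)) (vandermonde x).det := by
  have hprod : (vandermonde x).det = ∏ q : Fin n × Fin n with q.1 < q.2, (x q.2 - x q.1) := by
    rw [det_vandermonde, prod_filter, Fintype.prod_prod_type]
    refine prod_congr rfl fun i _ => ?_
    rw [← prod_filter, filter_lt_eq_Ioi]
  rw [hprod]
  refine Associated.prod _ _ _ fun q _ => ?_
  rw [← neg_sub]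
  exact (Associated.refl _).neg_left

theorem nodal_eq_mul_nodal_removeNth (x : Fin (n + 1) → R) (j : Fin (n + 1)) :
    nodal univ x = (X - C (x j)) * nodal univ (j.removeNth x) :=
  Fin.prod_univ_succAbove _ j

theorem eval_derivative_nodal_eq_prod_removeNth (x : Fin (n + 1) → R) (j : Fin (n + 1)) :
    (nodal univ x).derivative.eval (x j) = ∏ i, (x j - j.removeNth x i) := by
  rw [nodal_eq_mul_nodal_removeNth x j]
  simp [eval_nodal]

theorem associated_derivative_mul_det_vandermonde_removeNth (x : Fin (n + 1) → R)
    (j : Fin (n + 1)) :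
    Associated
      ((nodal univ x).derivative.eval (x j) * (vandermonde (j.removeNth x)).det)
      (vandermonde x).det := by
  have hcons : x ∘ j.cycleRange.symm = Fin.cons (x j) (j.removeNth x) := by
    rw [← Fin.insertNth_comp_cycleRange_symm, Fin.insertNth_self_removeNth]
  refine .trans ?_ (associated_det_vandermonde_comp_perm x j.cycleRange.symm)
  rw [hcons, det_vandermonde (Fin.cons _ _), Fin.prod_univ_succ,
    eval_derivative_nodal_eq_prod_removeNth]
  simp only [Fin.prod_Ioi_zero, Fin.prod_Ioi_succ, Fin.cons_zero, Fin.cons_succ,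
    ← det_vandermonde]
  refine Associated.mul_right (Associated.prod _ _ _ fun i _ => ?_) _
  rw [← neg_sub]
  exact (Associated.refl _).neg_left

end Vandermonde

section Divisibility

variable {R : Type*} [CommRing R]

theorem isUnit_of_mul_dvd_self [IsLocalRing R] {a m : R} (ha : a ≠ 0) (h : a * m ∣ a) :
    IsUnit m := by
  obtain ⟨t, ht⟩ := h
  rcases IsLocalRing.isUnit_or_isUnit_one_sub_self (m * t) with hu | hu
  · exact isUnit_of_mul_isUnit_left hu
  · exact absurd (hu.mul_left_eq_zero.1 (by linear_combination ht)) ha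

variable [PreValuationRing R] {a b c s : R}

theorem associated_of_mul_left_associated (h : Associated (c * a) (c * b)) (h0 : c * a ≠ 0) :
    Associated a b := by
  have : Nontrivial R := nontrivial_of_ne _ _ h0
  obtain ⟨m, rfl | rfl⟩ := PreValuationRing.cond a b
  · have hm : IsUnit m := isUnit_of_mul_dvd_self h0 (by simpa only [mul_assoc] using h.symm.dvd)
    exact (associated_mul_unit_left a m hm).symm
  · have hm : IsUnit m :=
      isUnit_of_mul_dvd_self (h.ne_zero_iff.1 h0) (by simpa only [mul_assoc] using h.dvd)
    exact associated_mul_unit_left b m hm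

theorem associated_of_sq_eq_sq (h : a ^ 2 = b ^ 2) (h0 : a ^ 2 ≠ 0) : Associated a b := by
  have : Nontrivial R := nontrivial_of_ne _ _ h0
  obtain ⟨m, rfl | rfl⟩ := PreValuationRing.cond a b
  · have hm : IsUnit (m ^ 2) := isUnit_of_mul_dvd_self h0 (by rw [← mul_pow, ← h])
    exact (associated_mul_unit_left a m ((isUnit_pow_iff two_ne_zero).1 hm)).symm
  · have hm : IsUnit (m ^ 2) := isUnit_of_mul_dvd_self (h ▸ h0) (by rw [← mul_pow, h])
    exact associated_mul_unit_left b m ((isUnit_pow_iff two_ne_zero).1 hm)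

theorem dvd_of_mul_eq_zero_of_mul_ne_zero (hs : s * b = 0) (hab : a * b ≠ 0) : a ∣ s := by
  refine (ValuationRing.dvd_total a s).resolve_right ?_
  rintro ⟨t, rfl⟩
  exact hab (by rw [mul_right_comm, hs, zero_mul])

theorem exists_sub_mul_derivative_nodal_eq_zero {ι : Type*} [Fintype ι] [Nonempty ι]
    (y : ι → R) {r : R} (hr : (nodal univ y).eval r = 0) :
    ∃ j, (r - y j) * (nodal univ y).derivative.eval (y j) = 0 := by
  classical
  have : Std.Total (α := R) (· ∣ ·) := PreValuationRing.iff_dvd_total.1 inferInstance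
  obtain ⟨j, hj⟩ := (Std.Total.directed (r := (· ∣ ·)) fun i => r - y i).finite_le id
  refine ⟨j, zero_dvd_iff.1 ?_⟩
  rw [← hr, eval_nodal_derivative_eval_node_eq (mem_univ j), eval_nodal, eval_nodal,
    ← mul_prod_erase _ _ (mem_univ j)]
  refine mul_dvd_mul_left _ (prod_dvd_prod_of_dvd _ _ fun i _ => ?_)
  rw [← sub_sub_sub_cancel_left (y i) (y j) r]
  exact dvd_sub dvd_rfl (hj i)

theorem associated_eval_of_sub_mul_eval_eq_zero (f : R[X]) {r : R}
    (hr : (r - a) * f.eval a = 0) (ha : f.eval a ^ 2 ≠ 0) :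
    Associated (f.eval a) (f.eval r) := by
  have : Nontrivial R := nontrivial_of_ne _ _ ha
  obtain ⟨m, hm⟩ := dvd_of_mul_eq_zero_of_mul_ne_zero hr (sq (f.eval a) ▸ ha)
  obtain ⟨q, hq⟩ := sub_dvd_eval_sub r a f
  have hfactor : f.eval r = f.eval a * (1 + m * q) := by
    linear_combination hq + q * hm
  have hunit : IsUnit (1 + m * q) :=
    isUnit_of_mul_dvd_self ha (dvd_of_eq (by linear_combination q * hr - q * f.eval a * hm))
  rw [hfactor]
  exact (associated_mul_unit_left _ _ hunit).symm

end Divisibility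

section Counting

theorem encard_le_mul_encard_of_mapsTo {α β : Type*} {f : α → β} {s : Set α} {t : Set β}
    {c : ℕ∞} (hf : Set.MapsTo f s t) (hc : ∀ b ∈ t, {a ∈ s | f a = b}.encard ≤ c) :
    s.encard ≤ c * t.encard := by
  have hcover : s ⊆ ⋃ b ∈ t, {a ∈ s | f a = b} := fun a ha =>
    Set.mem_biUnion (hf ha) ⟨ha, rfl⟩
  obtain ht | ht := t.finite_or_infinite
  · lift t to Finset β using ht
    calc s.encard ≤ ∑ b ∈ t, {a ∈ s | f a = b}.encard :=
          (Set.encard_le_encard hcover).trans (t.set_encard_biUnion_le _)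
      _ ≤ ∑ _b ∈ t, c := sum_le_sum hc
      _ = c * (t : Set β).encard := by simp [mul_comm]
  · obtain rfl | hc0 := eq_or_ne c 0
    · have hs : s = ∅ := Set.eq_empty_of_forall_notMem fun a ha => by
        simpa using (Set.encard_eq_zero.1 (le_zero_iff.1 (hc _ (hf ha)))).le ⟨ha, rfl⟩
      simp [hs]
    · simp [ht.encard_eq, ENat.mul_top hc0]

variable {R : Type*} [CommRing R] {a b : R}

theorem setOf_mul_eq_zero_congr (h : Associated a b) :
    {r : R | r * a = 0} = {r : R | r * b = 0} :=
  Set.ext fun r => (h.mul_left r).eq_zero_iff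

theorem encard_mul_encard_setOf_mul_eq_zero_le [PreValuationRing R] (hab : a * b ≠ 0) :
    {r : R | r * b = 0}.encard * {r : R | r * a = 0}.encard ≤
      {r : R | r * (a * b) = 0}.encard := by
  -- Multiplication by `a` maps `Ann (a * b)` onto `Ann b` with kernel `Ann a`; `g` is a section.
  have hlift : ∀ s : R, s * b = 0 → ∃ t, s = a * t := fun s hs =>
    dvd_of_mul_eq_zero_of_mul_ne_zero hs hab
  choose! g hg using hlift
  rw [← Set.encard_prod]
  refine Set.encard_le_encard_of_injOn (f := fun q => g q.1 + q.2) ?_ ?_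
  · rintro ⟨s, k⟩ ⟨hs, hk⟩
    simp only [Set.mem_ofPred_eq] at hs hk ⊢
    linear_combination b * hk + hs - b * hg s hs
  · rintro ⟨s, k⟩ ⟨hs, hk⟩ ⟨s', k'⟩ ⟨hs', hk'⟩ heq
    simp only [Set.mem_ofPred_eq] at hs hk hs' hk' heq
    obtain rfl : s = s' := by
      linear_combination hg s hs - hg s' hs' + a * heq - hk + hk'
    simpa using heq

theorem encard_setOf_nodal_eq_and_zero_eq_le {n : ℕ} (x : Fin (n + 1) → R) :
    {z : Fin (n + 1) → R | nodal univ z = nodal univ x ∧ z 0 = x 0}.encard ≤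
      {z : Fin n → R | nodal univ z = nodal univ (Fin.tail x)}.encard := by
  refine Set.encard_le_encard_of_injOn (f := Fin.tail) ?_ ?_
  · rintro z ⟨hz, hz0⟩
    rw [nodal_eq_mul_nodal_removeNth z 0, nodal_eq_mul_nodal_removeNth x 0, hz0] at hz
    exact (monic_X_sub_C (x 0)).isRegular.left hz
  · rintro z ⟨-, hz0⟩ z' ⟨-, hz0'⟩ htail
    rw [← Fin.cons_self_tail z, ← Fin.cons_self_tail z', hz0, hz0', htail]

end Counting

section Solutions

variable {R : Type*} [CommRing R] [PreValuationRing R] {n : ℕ}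

theorem associated_det_vandermonde_removeNth_tail {x y : Fin (n + 1) → R}
    (hxy : nodal univ x = nodal univ y) (hy : (vandermonde y).det ^ 2 ≠ 0) {j : Fin (n + 1)}
    (hj : (x 0 - y j) * (nodal univ y).derivative.eval (y j) = 0) :
    Associated (vandermonde (j.removeNth y)).det (vandermonde (Fin.tail x)).det := by
  set c := (nodal univ y).derivative.eval (y j)
  have hD := associated_derivative_mul_det_vandermonde_removeNth y j
  have hDsq := (hD.pow_pow (n := 2)).ne_zero_iff.2 hy
  have hc : c ^ 2 ≠ 0 := left_ne_zero_of_mul (mul_pow c _ 2 ▸ hDsq)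
  have hder := associated_eval_of_sub_mul_eval_eq_zero _ hj hc
  refine associated_of_mul_left_associated (c := c) ?_ (ne_zero_pow two_ne_zero hDsq)
  calc Associated (c * (vandermonde (j.removeNth y)).det) (vandermonde y).det := hD
    Associated _ (vandermonde x).det :=
      associated_of_sq_eq_sq (det_vandermonde_sq_eq_of_nodal_eq_nodal hxy).symm hy
    Associated _ ((nodal univ x).derivative.eval (x 0) * (vandermonde (Fin.tail x)).det) :=
      (associated_derivative_mul_det_vandermonde_removeNth x 0).symm
    Associated _ (c * (vandermonde (Fin.tail x)).det) := by
      rw [hxy]; exact hder.symm.mul_right _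

theorem encard_setOf_nodal_eq_and_sub_mul_eq_zero_le {y : Fin (n + 1) → R}
    (hy : (vandermonde y).det ^ 2 ≠ 0) (j : Fin (n + 1)) {m : ℕ∞}
    (hm : ∀ x : Fin n → R, (vandermonde x).det ^ 2 ≠ 0 →
      {z : Fin n → R | nodal univ z = nodal univ x}.encard ≤
        m * {r : R | r * (vandermonde x).det = 0}.encard) :
    {x : Fin (n + 1) → R | nodal univ x = nodal univ y ∧
        (x 0 - y j) * (nodal univ y).derivative.eval (y j) = 0}.encard ≤
      m * {r : R | r * (vandermonde y).det = 0}.encard := by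
  set c := (nodal univ y).derivative.eval (y j)
  set d := (vandermonde (j.removeNth y)).det
  have hcd : Associated (c * d) (vandermonde y).det :=
    associated_derivative_mul_det_vandermonde_removeNth y j
  have hcdsq : (c * d) ^ 2 ≠ 0 := (hcd.pow_pow (n := 2)).ne_zero_iff.2 hy
  set S := {x : Fin (n + 1) → R | nodal univ x = nodal univ y ∧ (x 0 - y j) * c = 0}
  have hfiber : ∀ s ∈ {s : R | s * c = 0},
      {x ∈ S | x 0 - y j = s}.encard ≤ m * {r : R | r * d = 0}.encard := by
    intro s _
    obtain hempty | ⟨x, ⟨hxy, hxj⟩, rfl⟩ := {x ∈ S | x 0 - y j = s}.eq_empty_or_nonempty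
    · rw [hempty, Set.encard_empty]
      exact zero_le
    have hd := associated_det_vandermonde_removeNth_tail hxy hy hxj
    have htail : (vandermonde (Fin.tail x)).det ^ 2 ≠ 0 :=
      (hd.pow_pow (n := 2)).ne_zero_iff.1 (right_ne_zero_of_mul (mul_pow c d 2 ▸ hcdsq))
    rw [setOf_mul_eq_zero_congr hd]
    refine .trans (Set.encard_le_encard ?_)
      ((encard_setOf_nodal_eq_and_zero_eq_le x).trans (hm _ htail))
    rintro z ⟨⟨hz, -⟩, hz0⟩
    exact ⟨hz.trans hxy.symm, sub_left_injective hz0⟩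
  calc _ ≤ m * {r : R | r * d = 0}.encard * {s : R | s * c = 0}.encard :=
        encard_le_mul_encard_of_mapsTo (fun x hx => hx.2) hfiber
    _ ≤ m * {r : R | r * (c * d) = 0}.encard := by
        rw [mul_assoc]
        gcongr
        exact encard_mul_encard_setOf_mul_eq_zero_le (ne_zero_pow two_ne_zero hcdsq)
    _ = m * {r : R | r * (vandermonde y).det = 0}.encard := by rw [setOf_mul_eq_zero_congr hcd]

theorem encard_setOf_nodal_eq_le (y : Fin n → R) (hy : (vandermonde y).det ^ 2 ≠ 0) :
    {x : Fin n → R | nodal univ x = nodal univ y}.encard ≤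
      n.factorial * {r : R | r * (vandermonde y).det = 0}.encard := by
  induction n with
  | zero => simp
  | succ n ih =>
    have hcover : {x : Fin (n + 1) → R | nodal univ x = nodal univ y} ⊆
        ⋃ j, {x | nodal univ x = nodal univ y ∧
          (x 0 - y j) * (nodal univ y).derivative.eval (y j) = 0} := by
      intro x hx
      have hroot : (nodal univ y).eval (x 0) = 0 := by
        rw [← hx, eval_nodal_at_node (mem_univ 0)]
      obtain ⟨j, hj⟩ := exists_sub_mul_derivative_nodal_eq_zero y hroot
      exact Set.mem_iUnion.2 ⟨j, hx, hj⟩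
    calc _ ≤ ∑ j, {x : Fin (n + 1) → R | nodal univ x = nodal univ y ∧
            (x 0 - y j) * (nodal univ y).derivative.eval (y j) = 0}.encard :=
          (Set.encard_le_encard hcover).trans (Set.encard_iUnion_le_of_fintype _)
      _ ≤ ∑ _j : Fin (n + 1),
            n.factorial * {r : R | r * (vandermonde y).det = 0}.encard :=
          sum_le_sum fun j _ => encard_setOf_nodal_eq_and_sub_mul_eq_zero_le hy j ih
      _ = (n + 1).factorial * {r : R | r * (vandermonde y).det = 0}.encard := by
          simp [Nat.factorial_succ, mul_assoc]

end Solutions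

section ZModPrimePow

variable {p : ℕ} [Fact p.Prime] {α : ℕ}

instance preValuationRing_zmod_prime_pow : PreValuationRing (ZMod (p ^ α)) :=
  Function.Surjective.preValuationRing (PadicInt.toZModPow (p := p) α).toMulHom
    (ZMod.ringHom_surjective (PadicInt.toZModPow α))

theorem isUnit_natCast_zmod_prime_pow {m : ℕ} (h : ¬ p ∣ m) : IsUnit (m : ZMod (p ^ α)) :=
  (ZMod.isUnit_iff_coprime m _).2
    (((Nat.Prime.coprime_iff_not_dvd Fact.out).2 h).symm.pow_right α)

theorem associated_prime_pow_of_dvd_val {δ : ℕ} {a : ZMod (p ^ α)} (hdvd : p ^ δ ∣ a.val)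
    (hndvd : ¬ p ^ (δ + 1) ∣ a.val) : Associated (p ^ δ : ZMod (p ^ α)) a := by
  obtain ⟨m, hm⟩ := hdvd
  have hpm : ¬ p ∣ m := fun h => hndvd (by rw [hm, pow_succ]; exact mul_dvd_mul_left _ h)
  have ha : a = (p ^ δ : ZMod (p ^ α)) * m := by
    rw [← ZMod.natCast_zmod_val a, hm]; push_cast; rfl
  rw [ha]
  exact (associated_mul_unit_left _ _ (isUnit_natCast_zmod_prime_pow hpm)).symm

theorem prime_pow_sq_ne_zero_zmod {δ : ℕ} (hδ : 2 * δ < α) :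
    (p ^ δ : ZMod (p ^ α)) ^ 2 ≠ 0 := by
  rw [← pow_mul', ← Nat.cast_pow, Ne, ZMod.natCast_eq_zero_iff,
    Nat.pow_dvd_pow_iff_le_right (Fact.out : p.Prime).one_lt]
  exact hδ.not_ge

theorem encard_setOf_mul_natCast_eq_zero_le {N m : ℕ} [NeZero N] (hm : 0 < m) :
    {r : ZMod N | r * m = 0}.encard ≤ m := by
  have hcard := IsAddCyclic.card_nsmul_eq_zero_le (α := ZMod N) hm
  rw [← Nat.cast_le (α := ℕ∞), ← Set.encard_coe_eq_coe_finsetCard] at hcard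
  simpa [mul_comm] using hcard

end ZModPrimePow

theorem stmt_18_general {R : Type*} [CommRing R] [PreValuationRing R] {n : ℕ}
    (hn : IsUnit (n.factorial : R)) (y : Fin n → R) (hy : (vandermonde y).det ^ 2 ≠ 0) :
    {x : Fin n → R | ∀ k : ℕ, 1 ≤ k → k ≤ n → ∑ i, x i ^ k = ∑ i, y i ^ k}.encard ≤
      n.factorial * {r : R | r * (vandermonde y).det = 0}.encard := by
  refine (Set.encard_le_encard fun x hx => ?_).trans (encard_setOf_nodal_eq_le y hy)
  exact nodal_eq_nodal_of_sum_pow_eq (by simpa using hn) (by simpa using hx)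

/-- Hensel-type solution count: let `p > n` be prime, `α ≥ 1`,
`y ∈ (ℤ/p^αℤ)ⁿ`, and suppose `p^δ` exactly divides `∏_{j<k}(y_j - y_k)` with
`2δ < α`. Then the number of `x ∈ (ℤ/p^αℤ)ⁿ` with `∑ xᵢᵏ = ∑ yᵢᵏ` for
`k = 1, …, n` is at most `n! p^δ`. -/
theorem stmt_18 (p n α δ : ℕ) (hp : p.Prime) (hpn : n < p) (hα : 1 ≤ α)
    (y : Fin n → ZMod (p ^ α)) (hδ : 2 * δ < α)
    (hdvd : p ^ δ ∣
      ((∏ q ∈ Finset.univ.filter fun q : Fin n × Fin n => q.1 < q.2,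
        (y q.1 - y q.2)).val))
    (hndvd : ¬ p ^ (δ + 1) ∣
      ((∏ q ∈ Finset.univ.filter fun q : Fin n × Fin n => q.1 < q.2,
        (y q.1 - y q.2)).val)) :
    Nat.card {x : Fin n → ZMod (p ^ α) //
        ∀ k : ℕ, 1 ≤ k → k ≤ n → ∑ i, (x i) ^ k = ∑ i, (y i) ^ k}
      ≤ n.factorial * p ^ δ := by
  have : Fact p.Prime := ⟨hp⟩
  have : NeZero (p ^ α) := ⟨pow_ne_zero α hp.ne_zero⟩
  have hD := (associated_prime_pow_of_dvd_val hdvd hndvd).trans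
    (associated_prod_sub_det_vandermonde y)
  have hDsq : (vandermonde y).det ^ 2 ≠ 0 :=
    (hD.pow_pow (n := 2)).ne_zero_iff.1 (prime_pow_sq_ne_zero_zmod hδ)
  have hfact : IsUnit (n.factorial : ZMod (p ^ α)) :=
    isUnit_natCast_zmod_prime_pow (hp.dvd_factorial.not.2 hpn.not_ge)
  have hcount := stmt_18_general hfact y hDsq
  rw [← setOf_mul_eq_zero_congr hD] at hcount
  refine ENat.toNat_le_of_le_natCast (hcount.trans ?_)
  push_cast
  gcongr
  exact_mod_cast encard_setOf_mul_natCast_eq_zero_le (N := p ^ α) (pow_pos hp.pos δ)
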